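/- arXiv:2310.00526 — 4 statements merged into one kernel-verified Lean document; each statement's English description precedes it below -/
import Mathlib

section
/- Let N and F be natural numbers, let C, A_1, …, A_F be real symmetric N×N matrices, let b ∈ ℝ^F, λ ∈ ℝ^F, let Y ≥ 0 be a real number, and let X̃ be a real positive semidefinite N×N matrix. Define ∇F_λ := C + Σ_{i=1}^F λ_i A_i and F_λ(X̃) := ⟨C, X̃⟩ + Σ_{i=1}^F λ_i(⟨A_i, X̃⟩ − b_i). If λ_min(∇F_λ) ≤ 0, then every real positive semidefinite N×N matrix X satisfying ⟨A_i, X⟩ = b_i for all i = 1,…,F and Tr(X) ≤ Y obeys ⟨C, X⟩ ≥ F_λ(X̃) − ⟨∇F_λ, X̃⟩ + λ_min(∇F_λ)·Y. -/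
open Matrix BigOperators

/-- Frobenius inner product `⟨A, B⟩ = Tr(Aᵀ B)` of two square real matrices. -/
noncomputable def frobInner {N : ℕ} (A B : Matrix (Fin N) (Fin N) ℝ) : ℝ :=
  (Aᵀ * B).trace

/-- Least eigenvalue of a real symmetric (Hermitian) matrix (junk value `0` otherwise). -/
noncomputable def lambdaMin {N : ℕ} (M : Matrix (Fin N) (Fin N) ℝ) : ℝ :=
  if h : M.IsHermitian then ⨅ i, h.eigenvalues i else 0

/-!
`F_λ` is affine with gradient `∇F_λ`, so `F_λ(X̃) - ⟨∇F_λ, X̃⟩ = -∑ λᵢ bᵢ` for every `X̃`. For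
feasible `X` it follows that `⟨C, X⟩ = F_λ(X) = F_λ(X̃) - ⟨∇F_λ, X̃⟩ + ⟨∇F_λ, X⟩`. Positive
semidefinite matrices pair nonnegatively; applied to `∇F_λ - λ_min(∇F_λ) • 1` and `X`, this bounds
the last term below by `λ_min(∇F_λ) Tr X`, and `λ_min(∇F_λ) ≤ 0` lets `Y` replace `Tr X`.
-/

section PosSemidef

open scoped ComplexOrder MatrixOrder

variable {n 𝕜 : Type*} [Fintype n] [RCLike 𝕜] {A B : Matrix n n 𝕜}

theorem trace_mul_nonneg_of_posSemidef (hA : A.PosSemidef) (hB : B.PosSemidef) :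
    0 ≤ (A * B).trace := by
  classical
  obtain ⟨L, rfl⟩ := CStarAlgebra.nonneg_iff_eq_star_mul_self.mp hA.nonneg
  calc 0 ≤ (L * B * Lᴴ).trace := (hB.mul_mul_conjTranspose_same L).trace_nonneg
    _ = (star L * L * B).trace := by rw [trace_mul_cycle, star_eq_conjTranspose]

theorem posSemidef_sub_algebraMap_iff_le_eigenvalues [DecidableEq n] (hA : A.IsHermitian) {c : ℝ} :
    (A - algebraMap ℝ (Matrix n n 𝕜) c).PosSemidef ↔ ∀ i, c ≤ hA.eigenvalues i := by
  rw [← le_iff, algebraMap_le_iff_le_spectrum hA, hA.spectrum_real_eq_range_eigenvalues,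
    Set.forall_mem_range]

end PosSemidef

section LeastEigenvalue

variable {N : ℕ} {M X : Matrix (Fin N) (Fin N) ℝ}

theorem lambdaMin_le_eigenvalues (hM : M.IsHermitian) (i : Fin N) :
    lambdaMin M ≤ hM.eigenvalues i := by
  rw [lambdaMin, dif_pos hM]
  exact ciInf_le (Set.finite_range _).bddBelow i

theorem lambdaMin_mul_trace_le_frobInner (hM : M.IsSymm) (hX : X.PosSemidef) :
    lambdaMin M * X.trace ≤ frobInner M X := by
  have hMH : M.IsHermitian := isHermitian_iff_isSymm.mpr hM
  have hshift : (M - algebraMap ℝ _ (lambdaMin M)).PosSemidef :=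
    (posSemidef_sub_algebraMap_iff_le_eigenvalues hMH).mpr (lambdaMin_le_eigenvalues hMH)
  have hpair : 0 ≤ (M * X).trace - lambdaMin M * X.trace := by
    simpa only [sub_mul, trace_sub, Algebra.algebraMap_eq_smul_one, smul_mul_assoc, one_mul,
      trace_smul, smul_eq_mul] using trace_mul_nonneg_of_posSemidef hshift hX
  rw [frobInner, hM.eq]
  exact sub_nonneg.mp hpair

end LeastEigenvalue

section Lagrangian

variable {N : ℕ} {ι : Type*} [Fintype ι]

/-- The Lagrangian `F_λ(X) = ⟨C, X⟩ + ∑ λᵢ (⟨Aᵢ, X⟩ - bᵢ)` of the semidefinite program, in which the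
constraints `⟨Aᵢ, X⟩ = bᵢ` are dualized but `X ⪰ 0` and the trace bound are not. -/
noncomputable def lagrangian (C : Matrix (Fin N) (Fin N) ℝ) (A : ι → Matrix (Fin N) (Fin N) ℝ)
    (b lam : ι → ℝ) (X : Matrix (Fin N) (Fin N) ℝ) : ℝ :=
  frobInner C X + ∑ i, lam i * (frobInner (A i) X - b i)

/-- The gradient `∇F_λ = C + ∑ λᵢ Aᵢ` of the Lagrangian with respect to the Frobenius inner product;
it is constant in `X` because the Lagrangian is affine. -/
def lagrangianGradient (C : Matrix (Fin N) (Fin N) ℝ) (A : ι → Matrix (Fin N) (Fin N) ℝ)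
    (lam : ι → ℝ) : Matrix (Fin N) (Fin N) ℝ :=
  C + ∑ i, lam i • A i

variable {C : Matrix (Fin N) (Fin N) ℝ} {A : ι → Matrix (Fin N) (Fin N) ℝ} {b lam : ι → ℝ}
  {X : Matrix (Fin N) (Fin N) ℝ}

theorem isSymm_lagrangianGradient (hC : C.IsSymm) (hA : ∀ i, (A i).IsSymm) :
    (lagrangianGradient C A lam).IsSymm := by
  simp only [lagrangianGradient, IsSymm, transpose_add, transpose_sum, transpose_smul, hC.eq,
    (hA _).eq]

theorem frobInner_lagrangianGradient :
    frobInner (lagrangianGradient C A lam) X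
      = frobInner C X + ∑ i, lam i * frobInner (A i) X := by
  simp only [lagrangianGradient, frobInner, transpose_add, transpose_sum, transpose_smul, add_mul,
    Finset.sum_mul, smul_mul_assoc, trace_add, trace_sum, trace_smul, smul_eq_mul]

theorem lagrangian_eq_frobInner_gradient_sub :
    lagrangian C A b lam X = frobInner (lagrangianGradient C A lam) X - ∑ i, lam i * b i := by
  rw [lagrangian, frobInner_lagrangianGradient]
  simp only [mul_sub, Finset.sum_sub_distrib, add_sub_assoc]

theorem lagrangian_le_frobInner (hX : ∀ i, lam i * (frobInner (A i) X - b i) ≤ 0) :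
    lagrangian C A b lam X ≤ frobInner C X :=
  add_le_of_nonpos_right (Finset.sum_nonpos fun i _ => hX i)

/-- The sign condition `hfeas` covers equality constraints, where it holds with equality, and also
constraints `⟨Aᵢ, X⟩ ≤ bᵢ` with a multiplier `λᵢ ≥ 0`. -/
theorem dual_certificate_lower_bound_general (hsymm : (lagrangianGradient C A lam).IsSymm)
    (hmin : lambdaMin (lagrangianGradient C A lam) ≤ 0) (hX : X.PosSemidef)
    (hfeas : ∀ i, lam i * (frobInner (A i) X - b i) ≤ 0) {Y : ℝ} (htr : X.trace ≤ Y)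
    (Xt : Matrix (Fin N) (Fin N) ℝ) :
    lagrangian C A b lam Xt - frobInner (lagrangianGradient C A lam) Xt
        + lambdaMin (lagrangianGradient C A lam) * Y
      ≤ frobInner C X := by
  set G := lagrangianGradient C A lam
  calc lagrangian C A b lam Xt - frobInner G Xt + lambdaMin G * Y
      = lambdaMin G * Y - ∑ i, lam i * b i := by
        rw [lagrangian_eq_frobInner_gradient_sub]
        ring
    _ ≤ lambdaMin G * X.trace - ∑ i, lam i * b i := by
        gcongr ?_ - _
        exact mul_le_mul_of_nonpos_left htr hmin
    _ ≤ frobInner G X - ∑ i, lam i * b i := by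
        gcongr
        exact lambdaMin_mul_trace_le_frobInner hsymm hX
    _ = lagrangian C A b lam X := lagrangian_eq_frobInner_gradient_sub.symm
    _ ≤ frobInner C X := lagrangian_le_frobInner hfeas

end Lagrangian

/-- the dual-certificate lower bound. -/
theorem dual_certificate_lower_bound
    {N F : ℕ} (C : Matrix (Fin N) (Fin N) ℝ) (A : Fin F → Matrix (Fin N) (Fin N) ℝ)
    (hC : C.IsSymm) (hA : ∀ i, (A i).IsSymm)
    (b lam : Fin F → ℝ) (Y : ℝ) (hY : 0 ≤ Y)
    (Xt : Matrix (Fin N) (Fin N) ℝ) (hXt : Xt.PosSemidef)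
    (hmin : lambdaMin (C + ∑ i, lam i • A i) ≤ 0)
    (X : Matrix (Fin N) (Fin N) ℝ) (hX : X.PosSemidef)
    (hfeas : ∀ i, frobInner (A i) X = b i) (htr : X.trace ≤ Y) :
    frobInner C X ≥
      (frobInner C Xt + ∑ i, lam i * (frobInner (A i) Xt - b i))
        - frobInner (C + ∑ i, lam i • A i) Xt
        + lambdaMin (C + ∑ i, lam i • A i) * Y := by
  exact dual_certificate_lower_bound_general (isSymm_lagrangianGradient hC hA) hmin hX
    (fun i => by rw [hfeas i, sub_self, mul_zero]) htr Xt
end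

section
/- Let N and F be natural numbers, let C, A_1, …, A_F be real symmetric N×N matrices, b ∈ ℝ^F, ρ ≥ 0, and B ≥ 0. Define L_ρ : Matrix N N ℝ → ℝ by L_ρ(V) := ⟨C, VᵀV⟩ + ρ·Σ_{i=1}^F (⟨A_i, VᵀV⟩ − b_i)², and define G(V) := 2VC + 4ρ·Σ_{i=1}^F (⟨A_i, VᵀV⟩ − b_i)·V A_i. Then: (i) L_ρ is differentiable at every V, and its Fréchet derivative at V applied to a matrix H equals ⟨G(V), H⟩ (so G(V) is the gradient of L_ρ with respect to the Frobenius inner product); and (ii) for all V, V' with ‖V‖_F ≤ B and ‖V'‖_F ≤ B, ‖G(V) − G(V')‖_F ≤ K·‖V − V'‖_F, where K := 2‖C‖_F + 4ρ·Σ_{i=1}^F (3B²·‖A_i‖_F² + |b_i|·‖A_i‖_F). -/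
open Matrix BigOperators

attribute [local instance] Matrix.frobeniusSeminormedAddCommGroup
  Matrix.frobeniusNormedAddCommGroup Matrix.frobeniusNormedSpace

/-- The penalized Lagrangian `L_ρ(V) = ⟨C, VᵀV⟩ + ρ Σ_i (⟨A_i, VᵀV⟩ - b_i)²`. -/
noncomputable def penalizedLagrangian {N F : ℕ} (C : Matrix (Fin N) (Fin N) ℝ)
    (A : Fin F → Matrix (Fin N) (Fin N) ℝ) (b : Fin F → ℝ) (ρ : ℝ)
    (V : Matrix (Fin N) (Fin N) ℝ) : ℝ :=
  frobInner C (Vᵀ * V) + ρ * ∑ i, (frobInner (A i) (Vᵀ * V) - b i) ^ 2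

/-- The gradient `G(V) = 2VC + 4ρ Σ_i (⟨A_i, VᵀV⟩ - b_i) V A_i`. -/
noncomputable def penalizedGrad {N F : ℕ} (C : Matrix (Fin N) (Fin N) ℝ)
    (A : Fin F → Matrix (Fin N) (Fin N) ℝ) (b : Fin F → ℝ) (ρ : ℝ)
    (V : Matrix (Fin N) (Fin N) ℝ) : Matrix (Fin N) (Fin N) ℝ :=
  (2 : ℝ) • (V * C) + (4 * ρ) • ∑ i, (frobInner (A i) (Vᵀ * V) - b i) • (V * A i)

/-!
Right multiplication `V ↦ V * M` is an operator on the Frobenius inner product space of matrices,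
symmetric when `M` is, of operator norm at most `‖M‖`, and `⟨M, VᵀV⟩ = ⟨V * M, V⟩`. So `L_ρ` is an
instance of `⟪T x, x⟫ + ρ Σ_i (⟪S_i x, x⟫ - b_i)²` for symmetric operators `T`, `S_i`, whose
gradient is `2 T x + 4ρ Σ_i (⟪S_i x, x⟫ - b_i) S_i x`. On the ball of radius `B` the coefficient
`⟪S_i x, x⟫ - b_i` is bounded by `‖S_i‖ B² + |b_i|` and is `2 B ‖S_i‖`-Lipschitz, while `S_i x` is
bounded by `‖S_i‖ B` and is `‖S_i‖`-Lipschitz; the product rule for Lipschitz constants then gives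
`3 B² ‖S_i‖² + |b_i| ‖S_i‖` for each `i`.
-/

open scoped RealInnerProductSpace

section QuadraticPenalty

variable {E ι : Type*} [NormedAddCommGroup E] [InnerProductSpace ℝ E] [Fintype ι]

/-- The quadratic penalty function `⟪T x, x⟫ + ρ Σ_i (⟪S_i x, x⟫ - b_i)²` for the problem of
minimizing `⟪T x, x⟫` subject to `⟪S_i x, x⟫ = b_i`. Quadratic forms are encoded by operators, so
that the gradient can be written down in a space that need not be complete. -/
noncomputable def quadraticPenalty (T : E →L[ℝ] E) (S : ι → E →L[ℝ] E) (b : ι → ℝ) (ρ : ℝ)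
    (x : E) : ℝ :=
  ⟪T x, x⟫ + ρ * ∑ i, (⟪S i x, x⟫ - b i) ^ 2

/-- The gradient of `quadraticPenalty T S b ρ` at `x`, for symmetric operators `T` and `S i`. -/
noncomputable def quadraticPenaltyGrad (T : E →L[ℝ] E) (S : ι → E →L[ℝ] E) (b : ι → ℝ) (ρ : ℝ)
    (x : E) : E :=
  (2 : ℝ) • T x + (4 * ρ) • ∑ i, (⟪S i x, x⟫ - b i) • S i x

theorem hasFDerivAt_inner_map_self {T : E →L[ℝ] E} (hT : T.IsSymmetric) (x : E) :
    HasFDerivAt (fun y => ⟪T y, y⟫) ((2 : ℝ) • innerSL ℝ (T x)) x := by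
  rw [ofNat_smul_eq_nsmul]
  exact (hT.hasStrictFDerivAt_reApplyInnerSelf x).hasFDerivAt

theorem hasFDerivAt_quadraticPenalty {T : E →L[ℝ] E} {S : ι → E →L[ℝ] E}
    (hT : T.IsSymmetric) (hS : ∀ i, (S i).IsSymmetric) (b : ι → ℝ) (ρ : ℝ) (x : E) :
    HasFDerivAt (quadraticPenalty T S b ρ) (innerSL ℝ (quadraticPenaltyGrad T S b ρ x)) x := by
  have hpenalty (i : ι) : HasFDerivAt (fun y => (⟪S i y, y⟫ - b i) ^ 2)
      ((4 * (⟪S i x, x⟫ - b i)) • innerSL ℝ (S i x)) x := by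
    convert! ((hasFDerivAt_inner_map_self (hS i) x).sub_const (b i)).pow 2 using 1
    module
  convert! (hasFDerivAt_inner_map_self hT x).add
    ((HasFDerivAt.fun_sum fun i (_ : i ∈ Finset.univ) => hpenalty i).const_mul ρ) using 1
  simp only [quadraticPenaltyGrad, map_add, map_smul, map_sum, Finset.smul_sum, smul_smul]
  congr! 3
  ring

theorem abs_inner_map_self_le (T : E →L[ℝ] E) (x : E) : |⟪T x, x⟫| ≤ ‖T‖ * ‖x‖ ^ 2 := by
  grw [abs_real_inner_le_norm, T.le_opNorm, mul_assoc, ← sq]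

theorem abs_inner_map_self_sub_le (T : E →L[ℝ] E) (x y : E) :
    |⟪T x, x⟫ - ⟪T y, y⟫| ≤ ‖T‖ * (‖x‖ + ‖y‖) * ‖x - y‖ := by
  have hsplit : ⟪T x, x⟫ - ⟪T y, y⟫ = ⟪T (x - y), x⟫ + ⟪T y, x - y⟫ := by
    rw [map_sub, inner_sub_left, inner_sub_right]
    ring
  calc |⟪T x, x⟫ - ⟪T y, y⟫| ≤ ‖T (x - y)‖ * ‖x‖ + ‖T y‖ * ‖x - y‖ := by
        grw [hsplit, abs_add_le, abs_real_inner_le_norm, abs_real_inner_le_norm]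
    _ ≤ ‖T‖ * ‖x - y‖ * ‖x‖ + ‖T‖ * ‖y‖ * ‖x - y‖ := by gcongr <;> exact T.le_opNorm _
    _ = ‖T‖ * (‖x‖ + ‖y‖) * ‖x - y‖ := by ring

theorem norm_inner_map_self_sub_smul_map_sub_le (T : E →L[ℝ] E) (β : ℝ) {B : ℝ} {x y : E}
    (hx : ‖x‖ ≤ B) (hy : ‖y‖ ≤ B) :
    ‖(⟪T x, x⟫ - β) • T x - (⟪T y, y⟫ - β) • T y‖ ≤
      (3 * B ^ 2 * ‖T‖ ^ 2 + |β| * ‖T‖) * ‖x - y‖ := by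
  have hB : 0 ≤ B := (norm_nonneg x).trans hx
  have hsplit : (⟪T x, x⟫ - β) • T x - (⟪T y, y⟫ - β) • T y =
      (⟪T x, x⟫ - ⟪T y, y⟫) • T x + (⟪T y, y⟫ - β) • T (x - y) := by
    rw [map_sub]
    module
  have hcoeff : |⟪T y, y⟫ - β| ≤ ‖T‖ * B ^ 2 + |β| := by
    grw [abs_sub, abs_inner_map_self_le, hy]
  have hcoeff_sub : |⟪T x, x⟫ - ⟪T y, y⟫| ≤ ‖T‖ * (B + B) * ‖x - y‖ := by
    grw [abs_inner_map_self_sub_le, hx, hy]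
  calc ‖(⟪T x, x⟫ - β) • T x - (⟪T y, y⟫ - β) • T y‖
      ≤ |⟪T x, x⟫ - ⟪T y, y⟫| * ‖T x‖ + |⟪T y, y⟫ - β| * ‖T (x - y)‖ := by
        grw [hsplit, norm_add_le, norm_smul, norm_smul, Real.norm_eq_abs, Real.norm_eq_abs]
    _ ≤ ‖T‖ * (B + B) * ‖x - y‖ * (‖T‖ * B) + (‖T‖ * B ^ 2 + |β|) * (‖T‖ * ‖x - y‖) := by
        gcongr
        · exact T.le_opNorm_of_le hx
        · exact T.le_opNorm _
    _ = (3 * B ^ 2 * ‖T‖ ^ 2 + |β| * ‖T‖) * ‖x - y‖ := by ring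

theorem norm_quadraticPenaltyGrad_sub_le (T : E →L[ℝ] E) (S : ι → E →L[ℝ] E) (b : ι → ℝ) (ρ : ℝ)
    {B : ℝ} {x y : E} (hx : ‖x‖ ≤ B) (hy : ‖y‖ ≤ B) :
    ‖quadraticPenaltyGrad T S b ρ x - quadraticPenaltyGrad T S b ρ y‖ ≤
      (2 * ‖T‖ + 4 * |ρ| * ∑ i, (3 * B ^ 2 * ‖S i‖ ^ 2 + |b i| * ‖S i‖)) * ‖x - y‖ := by
  have hsplit : quadraticPenaltyGrad T S b ρ x - quadraticPenaltyGrad T S b ρ y =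
      (2 : ℝ) • T (x - y) +
        (4 * ρ) • ∑ i, ((⟪S i x, x⟫ - b i) • S i x - (⟪S i y, y⟫ - b i) • S i y) := by
    rw [quadraticPenaltyGrad, quadraticPenaltyGrad, map_sub, Finset.sum_sub_distrib]
    module
  have hsum : ‖∑ i, ((⟪S i x, x⟫ - b i) • S i x - (⟪S i y, y⟫ - b i) • S i y)‖ ≤
      (∑ i, (3 * B ^ 2 * ‖S i‖ ^ 2 + |b i| * ‖S i‖)) * ‖x - y‖ := by
    rw [Finset.sum_mul]
    exact norm_sum_le_of_le _ fun i _ =>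
      norm_inner_map_self_sub_smul_map_sub_le (S i) (b i) hx hy
  have hρ : ‖4 * ρ‖ = 4 * |ρ| := by rw [norm_mul, Real.norm_ofNat, Real.norm_eq_abs]
  grw [hsplit, norm_add_le, norm_smul, norm_smul, Real.norm_two, hρ, hsum, T.le_opNorm]
  exact le_of_eq (by ring)

theorem penalizedLagrangian_gradient_and_lipschitz_general {T : E →L[ℝ] E} {S : ι → E →L[ℝ] E}
    (hT : T.IsSymmetric) (hS : ∀ i, (S i).IsSymmetric) (b : ι → ℝ) (ρ B : ℝ) :
    (∀ x, HasFDerivAt (quadraticPenalty T S b ρ) (innerSL ℝ (quadraticPenaltyGrad T S b ρ x)) x) ∧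
    ∀ x y, ‖x‖ ≤ B → ‖y‖ ≤ B →
      ‖quadraticPenaltyGrad T S b ρ x - quadraticPenaltyGrad T S b ρ y‖ ≤
        (2 * ‖T‖ + 4 * |ρ| * ∑ i, (3 * B ^ 2 * ‖S i‖ ^ 2 + |b i| * ‖S i‖)) * ‖x - y‖ :=
  ⟨hasFDerivAt_quadraticPenalty hT hS b ρ,
    fun _ _ hx hy => norm_quadraticPenaltyGrad_sub_le T S b ρ hx hy⟩

end QuadraticPenalty

theorem frobenius_norm_sq_eq_trace {m n : Type*} [Fintype m] [Fintype n] (X : Matrix m n ℝ) :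
    ‖X‖ ^ 2 = (Xᵀ * X).trace := by
  rw [Matrix.frobenius_norm_def, ← Real.sqrt_eq_rpow, Real.sq_sqrt (by positivity),
    Finset.sum_comm]
  simp [Matrix.trace, Matrix.mul_apply, sq]

/-- The Frobenius inner product `⟪X, Y⟫ = Tr(Xᵀ Y)` on real matrices, compatible with Mathlib's
Frobenius norm. Like that norm, it is not a global instance. -/
noncomputable abbrev frobeniusInnerProductSpace {m n : Type*} [Fintype m] [Fintype n] :
    InnerProductSpace ℝ (Matrix m n ℝ) where
  inner X Y := (Xᵀ * Y).trace
  norm_sq_eq_re_inner := frobenius_norm_sq_eq_trace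
  conj_inner_symm X Y := by simp [← Matrix.trace_transpose (Yᵀ * X)]
  add_left X Y Z := by simp [Matrix.add_mul]
  smul_left X Y r := by simp

attribute [local instance] frobeniusInnerProductSpace

theorem frobenius_inner_eq_trace {m n : Type*} [Fintype m] [Fintype n] (X Y : Matrix m n ℝ) :
    ⟪X, Y⟫ = (Xᵀ * Y).trace := rfl

section MulRight

variable {m n p : Type*} [Fintype m] [Fintype n] [Fintype p]

theorem frobenius_inner_mul_self (M : Matrix n n ℝ) (V : Matrix m n ℝ) :
    ⟪V * M, V⟫ = (Mᵀ * (Vᵀ * V)).trace := by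
  rw [frobenius_inner_eq_trace, Matrix.transpose_mul, Matrix.mul_assoc]

/-- The topology of the Frobenius norm. It agrees with Mathlib's entrywise topology on matrices, but
not reducibly; as a local instance it takes precedence over the latter, so that continuous linear
maps between matrix spaces carry the operator norm. -/
noncomputable abbrev frobeniusTopologicalSpace : TopologicalSpace (Matrix m n ℝ) :=
  PseudoMetricSpace.toUniformSpace.toTopologicalSpace

attribute [local instance] frobeniusTopologicalSpace

/-- Right multiplication `V ↦ V * M` as a continuous linear map for the Frobenius norms, the bounded
version of `mulRightLinearMap`. -/
noncomputable def mulRightCLM (m : Type*) [Fintype m] (M : Matrix n p ℝ) :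
    Matrix m n ℝ →L[ℝ] Matrix m p ℝ :=
  (mulRightLinearMap m ℝ M).mkContinuous ‖M‖ fun V =>
    (Matrix.frobenius_norm_mul V M).trans_eq (mul_comm _ _)

theorem mulRightCLM_apply (M : Matrix n p ℝ) (V : Matrix m n ℝ) :
    mulRightCLM m M V = V * M := rfl

theorem norm_mulRightCLM_le (M : Matrix n p ℝ) : ‖mulRightCLM m M‖ ≤ ‖M‖ :=
  LinearMap.mkContinuous_norm_le _ (norm_nonneg M) _

theorem isSymmetric_mulRightCLM {M : Matrix n n ℝ} (hM : M.IsSymm) :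
    (mulRightCLM m M).IsSymmetric := fun V W => by
  rw [ContinuousLinearMap.coe_coe, mulRightCLM_apply, mulRightCLM_apply, frobenius_inner_eq_trace,
    frobenius_inner_eq_trace, Matrix.transpose_mul, hM.eq, Matrix.mul_assoc, Matrix.trace_mul_comm,
    Matrix.mul_assoc]

variable {N F : ℕ} (C : Matrix (Fin N) (Fin N) ℝ) (A : Fin F → Matrix (Fin N) (Fin N) ℝ)
  (b : Fin F → ℝ) (ρ : ℝ)

theorem penalizedLagrangian_eq_quadraticPenalty :
    penalizedLagrangian C A b ρ =
      quadraticPenalty (mulRightCLM (Fin N) C) (fun i => mulRightCLM (Fin N) (A i)) b ρ := by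
  ext V
  simp only [penalizedLagrangian, quadraticPenalty, frobInner, mulRightCLM_apply,
    frobenius_inner_mul_self]

theorem penalizedGrad_eq_quadraticPenaltyGrad :
    penalizedGrad C A b ρ =
      quadraticPenaltyGrad (mulRightCLM (Fin N) C) (fun i => mulRightCLM (Fin N) (A i)) b ρ := by
  ext1 V
  simp only [penalizedGrad, quadraticPenaltyGrad, frobInner, mulRightCLM_apply,
    frobenius_inner_mul_self]

end MulRight

/-- the penalized Lagrangian is differentiable with gradient `G(V)`
(w.r.t. the Frobenius inner product), and `G` is Lipschitz on Frobenius-norm balls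
with an explicit constant. -/
theorem penalizedLagrangian_gradient_and_lipschitz
    {N F : ℕ} (C : Matrix (Fin N) (Fin N) ℝ) (A : Fin F → Matrix (Fin N) (Fin N) ℝ)
    (hC : C.IsSymm) (hA : ∀ i, (A i).IsSymm)
    (b : Fin F → ℝ) (ρ : ℝ) (hρ : 0 ≤ ρ) (B : ℝ) (hB : 0 ≤ B) :
    (∀ V : Matrix (Fin N) (Fin N) ℝ,
      DifferentiableAt ℝ (penalizedLagrangian C A b ρ) V ∧
      ∀ H : Matrix (Fin N) (Fin N) ℝ,
        fderiv ℝ (penalizedLagrangian C A b ρ) V H = frobInner (penalizedGrad C A b ρ V) H)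
    ∧
    (∀ V V' : Matrix (Fin N) (Fin N) ℝ, ‖V‖ ≤ B → ‖V'‖ ≤ B →
      ‖penalizedGrad C A b ρ V - penalizedGrad C A b ρ V'‖ ≤
        (2 * ‖C‖ + 4 * ρ * ∑ i, (3 * B ^ 2 * ‖A i‖ ^ 2 + |b i| * ‖A i‖)) * ‖V - V'‖) := by
  obtain ⟨hderiv, hlip⟩ := penalizedLagrangian_gradient_and_lipschitz_general
    (S := fun i => mulRightCLM (Fin N) (A i)) (isSymmetric_mulRightCLM hC)
    (fun i => isSymmetric_mulRightCLM (hA i)) b ρ B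
  rw [penalizedLagrangian_eq_quadraticPenalty, penalizedGrad_eq_quadraticPenaltyGrad]
  refine ⟨fun V => ⟨(hderiv V).differentiableAt, DFunLike.congr_fun (hderiv V).fderiv⟩,
    fun V V' hV hV' => (hlip V V' hV hV').trans ?_⟩
  rw [abs_of_nonneg hρ]
  gcongr <;> exact norm_mulRightCLM_le _
end

section
/- Let r be a positive integer and B ≥ 0. Define T : (ℝ^r)⁴ → ℝ by T(v_1, v_2, v_3, v_4) := (⟨v_1, v_2⟩ − ⟨v_3, v_4⟩)², where (ℝ^r)⁴ carries the Euclidean (ℓ²) product norm. Then T is twice continuously differentiable, and on the convex set S := {(v_1, v_2, v_3, v_4) : ‖v_i‖ ≤ B for each i = 1,…,4}, the second-derivative map v ↦ D²T(v) is Lipschitz with constant 12B; that is, ‖D²T(v) − D²T(v̂)‖ ≤ 12B·‖v − v̂‖ for all v, v̂ ∈ S, where the norm on second derivatives is the operator norm on continuous bilinear maps. -/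
open BigOperators

/-- `T(v₁,v₂,v₃,v₄) = (⟨v₁,v₂⟩ - ⟨v₃,v₄⟩)²`, with the quadruple of vectors in `ℝ^r`
modeled as a single Euclidean vector indexed by `Fin 4 × Fin r` (so the ambient norm is
the Euclidean ℓ² product norm). -/
noncomputable def pairPenalty (r : ℕ) (v : EuclideanSpace ℝ (Fin 4 × Fin r)) : ℝ :=
  ((∑ j, v (0, j) * v (1, j)) - ∑ j, v (2, j) * v (3, j)) ^ 2

/-!
Write `T v = b v v ^ 2` with `b` symmetric bilinear. The Hessian
`(h, k) ↦ 8 * b v h * b v k + 4 * b v v * b h k` is quadratic in `v`, so it is Lipschitz with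
constant `12 * ‖b‖ ^ 2 * (‖v‖ + ‖w‖)` between `v` and `w`. Here `b x y` pairs the blocks of `x` with
a signed permutation of the blocks of `y`, halved, so that `‖b‖ ≤ 1 / 2` by Cauchy-Schwarz; and four
blocks of norm at most `B` give `‖v‖, ‖w‖ ≤ 2 * B`, whence the constant `12 * B`.
-/

open scoped InnerProductSpace

section SquaredQuadraticForm

variable {𝕜 E : Type*} [NontriviallyNormedField 𝕜] [NormedAddCommGroup E] [NormedSpace 𝕜 E]

lemma hasFDerivAt_bilin_self {F : Type*} [NormedAddCommGroup F] [NormedSpace 𝕜 F]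
    (b : E →L[𝕜] E →L[𝕜] F) (v : E) :
    HasFDerivAt (fun v => b v v) (b v + b.flip v) v :=
  b.hasFDerivAt_of_bilinear (hasFDerivAt_id v) (hasFDerivAt_id v)

variable {b : E →L[𝕜] E →L[𝕜] 𝕜}

lemma hasFDerivAt_sq_bilin_self (hb : ∀ x y, b x y = b y x) (v : E) :
    HasFDerivAt (fun v => b v v ^ 2) ((4 * b v v) • b v) v := by
  refine ((hasFDerivAt_bilin_self b v).pow 2).congr_fderiv (ContinuousLinearMap.ext fun h => ?_)
  simp only [Nat.add_one_sub_one, pow_one, nsmul_eq_mul, Nat.cast_ofNat, smul_add, add_apply,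
    smul_apply, smul_eq_mul, ContinuousLinearMap.flip_apply, hb h v]
  ring

lemma iteratedFDeriv_two_sq_bilin_self_apply (hb : ∀ x y, b x y = b y x) (v : E)
    (m : Fin 2 → E) :
    iteratedFDeriv 𝕜 2 (fun v => b v v ^ 2) v m =
      8 * (b v (m 0) * b v (m 1)) + 4 * (b v v * b (m 0) (m 1)) := by
  have hfderiv : fderiv 𝕜 (fun v => b v v ^ 2) = fun v => (4 * b v v) • b v :=
    funext fun v => (hasFDerivAt_sq_bilin_self hb v).fderiv
  have hfderiv₂ := (((hasFDerivAt_bilin_self b v).const_mul 4).fun_smul b.hasFDerivAt).fderiv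
  rw [iteratedFDeriv_two_apply, hfderiv, hfderiv₂]
  simp only [smul_add, add_apply, smul_apply, ContinuousLinearMap.smulRight_apply, smul_eq_mul,
    ContinuousLinearMap.flip_apply, hb (m 0) v]
  ring

lemma norm_iteratedFDeriv_two_sq_bilin_self_sub_le (hb : ∀ x y, b x y = b y x) (v w : E) :
    ‖iteratedFDeriv 𝕜 2 (fun v => b v v ^ 2) v - iteratedFDeriv 𝕜 2 (fun v => b v v ^ 2) w‖ ≤
      12 * ‖b‖ ^ 2 * (‖v‖ + ‖w‖) * ‖v - w‖ := by
  refine ContinuousMultilinearMap.opNorm_le_bound (by positivity) fun m => ?_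
  have hsplit : (iteratedFDeriv 𝕜 2 (fun v => b v v ^ 2) v -
      iteratedFDeriv 𝕜 2 (fun v => b v v ^ 2) w) m =
        8 * (b (v - w) (m 0) * b v (m 1)) + 8 * (b w (m 0) * b (v - w) (m 1)) +
          4 * (b (v - w) (v + w) * b (m 0) (m 1)) := by
    simp only [sub_apply, iteratedFDeriv_two_sq_bilin_self_apply hb, map_sub, map_add, hb w v]
    ring
  have hmul (n : ℕ) (x₁ y₁ x₂ y₂ : E) : ‖(n : 𝕜) * (b x₁ y₁ * b x₂ y₂)‖ ≤
      n * ((‖b‖ * ‖x₁‖ * ‖y₁‖) * (‖b‖ * ‖x₂‖ * ‖y₂‖)) := by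
    rw [norm_mul, norm_mul]
    gcongr
    · simpa using Nat.norm_cast_le (α := 𝕜) n
    all_goals exact b.le_opNorm₂ _ _
  rw [hsplit, Fin.prod_univ_two]
  calc
    _ ≤ 8 * ((‖b‖ * ‖v - w‖ * ‖m 0‖) * (‖b‖ * ‖v‖ * ‖m 1‖)) +
          8 * ((‖b‖ * ‖w‖ * ‖m 0‖) * (‖b‖ * ‖v - w‖ * ‖m 1‖)) +
          4 * ((‖b‖ * ‖v - w‖ * ‖v + w‖) * (‖b‖ * ‖m 0‖ * ‖m 1‖)) :=
      norm_add₃_le.trans <| add_le_add_three (mod_cast hmul 8 _ _ _ _) (mod_cast hmul 8 _ _ _ _)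
        (mod_cast hmul 4 _ _ _ _)
    _ ≤ 8 * ((‖b‖ * ‖v - w‖ * ‖m 0‖) * (‖b‖ * ‖v‖ * ‖m 1‖)) +
          8 * ((‖b‖ * ‖w‖ * ‖m 0‖) * (‖b‖ * ‖v - w‖ * ‖m 1‖)) +
          4 * ((‖b‖ * ‖v - w‖ * (‖v‖ + ‖w‖)) * (‖b‖ * ‖m 0‖ * ‖m 1‖)) := by
      gcongr
      exact norm_add_le v w
    _ = 12 * ‖b‖ ^ 2 * (‖v‖ + ‖w‖) * ‖v - w‖ * (‖m 0‖ * ‖m 1‖) := by ring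

end SquaredQuadraticForm

section PairForm

variable {E F : Type*} [NormedAddCommGroup E] [NormedSpace ℝ E] [NormedAddCommGroup F]
  [InnerProductSpace ℝ F] (π : Fin 4 → E →L[ℝ] F)

/-- The symmetric bilinear form with quadratic form `v ↦ ⟪π 0 v, π 1 v⟫ - ⟪π 2 v, π 3 v⟫`, the base
of the squared penalty. The maps `π i` read four vectors off a configuration `v`, which may have
further components. -/
noncomputable def pairForm : E →L[ℝ] E →L[ℝ] ℝ :=
  let c : E →L[ℝ] E →L[ℝ] ℝ :=
    (innerSL ℝ).bilinearComp (π 0) (π 1) - (innerSL ℝ).bilinearComp (π 2) (π 3)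
  (2⁻¹ : ℝ) • (c + c.flip)

lemma pairForm_apply (x y : E) :
    pairForm π x y = (⟪π 0 x, π 1 y⟫_ℝ - ⟪π 2 x, π 3 y⟫_ℝ +
      (⟪π 1 x, π 0 y⟫_ℝ - ⟪π 3 x, π 2 y⟫_ℝ)) / 2 := by
  simp only [pairForm, smul_apply, add_apply, sub_apply, ContinuousLinearMap.bilinearComp_apply,
    ContinuousLinearMap.flip_apply, coe_innerSL_apply, smul_eq_mul, real_inner_comm (π 0 y),
    real_inner_comm (π 2 y)]
  ring

lemma pairForm_comm (x y : E) : pairForm π x y = pairForm π y x := by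
  simp only [pairForm_apply, real_inner_comm (π _ x)]
  ring

lemma pairForm_self (v : E) : pairForm π v v = ⟪π 0 v, π 1 v⟫_ℝ - ⟪π 2 v, π 3 v⟫_ℝ := by
  rw [pairForm_apply, real_inner_comm (π 0 v), real_inner_comm (π 2 v), add_self_div_two]

variable {π}

lemma norm_pairForm_le (hπ : ∀ v, ∑ i, ‖π i v‖ ^ 2 ≤ ‖v‖ ^ 2) : ‖pairForm π‖ ≤ 1 / 2 := by
  refine ContinuousLinearMap.opNorm_le_bound₂ _ (by norm_num) fun x y => ?_
  let σ : Equiv.Perm (Fin 4) := Equiv.swap 0 1 * Equiv.swap 2 3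
  have habs (i j : Fin 4) := abs_le.1 (abs_real_inner_le_norm (π i x) (π j y))
  calc
    _ ≤ 1 / 2 * ∑ i, ‖π i x‖ * ‖π (σ i) y‖ := by
      obtain ⟨h₀, h₁, h₂, h₃⟩ : σ 0 = 1 ∧ σ 1 = 0 ∧ σ 2 = 3 ∧ σ 3 = 2 := by decide
      rw [pairForm_apply, Real.norm_eq_abs, abs_le, Fin.sum_univ_four, h₀, h₁, h₂, h₃]
      constructor <;> linarith [habs 0 1, habs 1 0, habs 2 3, habs 3 2]
    _ ≤ 1 / 2 * (√(∑ i, ‖π i x‖ ^ 2) * √(∑ i, ‖π (σ i) y‖ ^ 2)) := by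
      gcongr
      exact Real.sum_mul_le_sqrt_mul_sqrt ..
    _ ≤ 1 / 2 * (‖x‖ * ‖y‖) := by
      rw [Equiv.sum_comp σ fun i => ‖π i y‖ ^ 2]
      gcongr <;> exact Real.sqrt_le_left (norm_nonneg _) |>.2 (hπ _)
    _ = 1 / 2 * ‖x‖ * ‖y‖ := by ring

theorem pairPenalty_contDiff_and_hessian_lipschitz_general
    (hπ : ∀ v, ∑ i, ‖π i v‖ ^ 2 ≤ ‖v‖ ^ 2) {T : E → ℝ}
    (hT : ∀ v, T v = (⟪π 0 v, π 1 v⟫_ℝ - ⟪π 2 v, π 3 v⟫_ℝ) ^ 2) (n : WithTop ℕ∞) :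
    ContDiff ℝ n T ∧ ∀ v w,
      ‖iteratedFDeriv ℝ 2 T v - iteratedFDeriv ℝ 2 T w‖ ≤ 3 * (‖v‖ + ‖w‖) * ‖v - w‖ := by
  obtain rfl : T = fun v => pairForm π v v ^ 2 := funext fun v => by rw [hT, pairForm_self]
  refine ⟨by fun_prop, fun v w => ?_⟩
  calc
    _ ≤ 12 * ‖pairForm π‖ ^ 2 * (‖v‖ + ‖w‖) * ‖v - w‖ :=
      norm_iteratedFDeriv_two_sq_bilin_self_sub_le (pairForm_comm π) v w
    _ ≤ 12 * (1 / 2) ^ 2 * (‖v‖ + ‖w‖) * ‖v - w‖ := by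
      gcongr
      exact norm_pairForm_le hπ
    _ = 3 * (‖v‖ + ‖w‖) * ‖v - w‖ := by ring

end PairForm

section Blocks

variable {𝕜 ι κ : Type*} [RCLike 𝕜]

variable (𝕜) in
/-- The projection of a Euclidean vector indexed by `ι × κ` onto its `i`-th block, the vector with
`j`-th coordinate `v (i, j)`. -/
noncomputable def blockProj (i : ι) : EuclideanSpace 𝕜 (ι × κ) →L[𝕜] EuclideanSpace 𝕜 κ :=
  (EuclideanSpace.equiv κ 𝕜).symm ∘L ContinuousLinearMap.pi fun j => EuclideanSpace.proj (i, j)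

lemma blockProj_apply (i : ι) (v : EuclideanSpace 𝕜 (ι × κ)) (j : κ) :
    blockProj 𝕜 i v j = v (i, j) := rfl

variable [Fintype ι] [Fintype κ]

lemma sum_norm_blockProj_sq (v : EuclideanSpace 𝕜 (ι × κ)) :
    ∑ i, ‖blockProj 𝕜 i v‖ ^ 2 = ‖v‖ ^ 2 := by
  simp only [EuclideanSpace.norm_sq_eq, Fintype.sum_prod_type, blockProj_apply]

lemma norm_le_sqrt_card_mul_of_norm_blockProj_le {v : EuclideanSpace 𝕜 (ι × κ)} {B : ℝ}
    (hB : 0 ≤ B) (hv : ∀ i, ‖blockProj 𝕜 i v‖ ≤ B) : ‖v‖ ≤ √(Fintype.card ι) * B := by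
  refine le_of_sq_le_sq ?_ (by positivity)
  calc
    ‖v‖ ^ 2 = ∑ i, ‖blockProj 𝕜 i v‖ ^ 2 := (sum_norm_blockProj_sq v).symm
    _ ≤ ∑ _i : ι, B ^ 2 := by
      gcongr with i
      exact hv i
    _ = (√(Fintype.card ι) * B) ^ 2 := by simp [mul_pow]

end Blocks

lemma pairPenalty_eq_inner_blockProj (r : ℕ) (v : EuclideanSpace ℝ (Fin 4 × Fin r)) :
    pairPenalty r v = (⟪blockProj ℝ 0 v, blockProj ℝ 1 v⟫_ℝ -
      ⟪blockProj ℝ 2 v, blockProj ℝ 3 v⟫_ℝ) ^ 2 := by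
  simp [pairPenalty, PiLp.inner_apply, blockProj_apply, mul_comm]

lemma norm_le_two_mul_of_sqrt_sum_sq_le {r : ℕ} {B : ℝ} (hB : 0 ≤ B)
    {v : EuclideanSpace ℝ (Fin 4 × Fin r)}
    (hv : ∀ i : Fin 4, Real.sqrt (∑ j, v (i, j) ^ 2) ≤ B) : ‖v‖ ≤ 2 * B := by
  have h := norm_le_sqrt_card_mul_of_norm_blockProj_le hB (v := v) fun i => by
    simpa [EuclideanSpace.norm_eq, blockProj_apply] using hv i
  rwa [Fintype.card_fin, Nat.cast_ofNat, show (4 : ℝ) = 2 ^ 2 by norm_num,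
    Real.sqrt_sq zero_le_two] at h

/-- `T` is twice continuously differentiable and its second derivative is
`12B`-Lipschitz on the set where each of the four component vectors has norm at most `B`. -/
theorem pairPenalty_contDiff_and_hessian_lipschitz
    (r : ℕ) (hr : 0 < r) (B : ℝ) (hB : 0 ≤ B) :
    ContDiff ℝ 2 (pairPenalty r) ∧
    ∀ v v' : EuclideanSpace ℝ (Fin 4 × Fin r),
      (∀ i : Fin 4, Real.sqrt (∑ j, v (i, j) ^ 2) ≤ B) →
      (∀ i : Fin 4, Real.sqrt (∑ j, v' (i, j) ^ 2) ≤ B) →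
      ‖iteratedFDeriv ℝ 2 (pairPenalty r) v - iteratedFDeriv ℝ 2 (pairPenalty r) v'‖ ≤
        12 * B * ‖v - v'‖ := by
  have h := pairPenalty_contDiff_and_hessian_lipschitz_general (π := blockProj (κ := Fin r) ℝ)
    (fun v => (sum_norm_blockProj_sq v).le) (pairPenalty_eq_inner_blockProj r) 2
  refine ⟨h.1, fun v v' hv hv' => (h.2 v v').trans ?_⟩
  have hv_norm := norm_le_two_mul_of_sqrt_sum_sq_le hB hv
  have hv'_norm := norm_le_two_mul_of_sqrt_sum_sq_le hB hv'
  exact mul_le_mul_of_nonneg_right (by linarith) (norm_nonneg _)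
end

section
/- Let C, A_1, …, A_F (F ≥ 1) be real N×N matrices, b ∈ ℝ^F, ρ > 0, and κ ≥ 0. Define H_ρ(X) := ⟨C, X⟩ + ρ·Σ_{i=1}^F (⟨A_i, X⟩ − b_i)², and for a matrix X̃ write τ_i := |⟨A_i, X̃⟩ − b_i|. Suppose X* is a matrix satisfying ⟨A_i, X*⟩ = b_i for all i, that H_ρ(X̃) ≤ H_ρ(X*), and that the robustness bound ⟨C, X* − X̃⟩ ≤ κ·√((1/F)·Σ_{i=1}^F τ_i) holds. Then the average squared constraint violation satisfies (1/F)·Σ_{i=1}^F τ_i² ≤ (κ/(ρF))^{4/3}. -/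
open Matrix BigOperators

/-- The quadratically penalized objective `H_ρ(X) = ⟨C,X⟩ + ρ Σ_i (⟨A_i,X⟩ - b_i)²`. -/
noncomputable def penalizedObj {N F : ℕ} (C : Matrix (Fin N) (Fin N) ℝ)
    (A : Fin F → Matrix (Fin N) (Fin N) ℝ) (b : Fin F → ℝ) (ρ : ℝ)
    (X : Matrix (Fin N) (Fin N) ℝ) : ℝ :=
  frobInner C X + ρ * ∑ i, (frobInner (A i) X - b i) ^ 2

/-!
Let `f` be the objective and `r_i` the `F` constraint residuals. If `x` is feasible and the
penalized objective at `y` is no larger than at `x`, then `ρ Σ_i r_i(y)² ≤ f x - f y`. Write `m`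
and `s` for the averages of `|r_i(y)|` and `r_i(y)²`. A robustness bound `f x - f y ≤ κ m ^ θ` gives
`s ≤ c m ^ θ` with `c = κ / (ρ F)`, and `m² ≤ s` by Jensen, so `s` bounds itself:
`s ≤ c s ^ (θ / 2)`, that is `s ≤ c ^ (1 / (1 - θ / 2))`. The square-root bound `θ = 1 / 2` yields
the exponent `4 / 3`.
-/

theorem frobInner_sub_right {N : ℕ} (A X Y : Matrix (Fin N) (Fin N) ℝ) :
    frobInner A (X - Y) = frobInner A X - frobInner A Y := by
  simp only [frobInner, Matrix.mul_sub, Matrix.trace_sub]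

theorem le_rpow_inv_one_sub_of_le_mul_rpow {s c q : ℝ} (hs : 0 ≤ s) (hc : 0 ≤ c) (hq : q < 1)
    (h : s ≤ c * s ^ q) : s ≤ c ^ (1 - q)⁻¹ := by
  rcases hs.eq_or_lt with rfl | hs_pos
  · exact Real.rpow_nonneg hc _
  · rw [Real.le_rpow_inv_iff_of_pos hs hc (sub_pos.2 hq), Real.rpow_sub hs_pos, Real.rpow_one]
    exact (div_le_iff₀ (Real.rpow_pos_of_pos hs_pos q)).2 h

theorem le_rpow_inv_one_sub_half_of_le_mul_rpow {s m c θ : ℝ} (hm : 0 ≤ m) (hc : 0 ≤ c)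
    (hθ₀ : 0 ≤ θ) (hθ₂ : θ < 2) (hms : m ^ 2 ≤ s) (h : s ≤ c * m ^ θ) :
    s ≤ c ^ (1 - θ / 2)⁻¹ := by
  have hs : 0 ≤ s := (sq_nonneg m).trans hms
  refine le_rpow_inv_one_sub_of_le_mul_rpow hs hc (by linarith) ?_
  calc s ≤ c * m ^ θ := h
    _ = c * (m ^ 2) ^ (θ / 2) := by
      rw [← Real.rpow_natCast, ← Real.rpow_mul hm, Nat.cast_ofNat, mul_div_cancel₀ θ two_ne_zero]
    _ ≤ c * s ^ (θ / 2) := by gcongr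

section Penalty

variable {α ι : Type*} [Fintype ι] {f : α → ℝ} {r : ι → α → ℝ} {ρ : ℝ} {x y : α}

theorem mul_sum_sq_le_sub_of_penalized_le (hfeas : ∀ i, r i x = 0)
    (hle : f y + ρ * ∑ i, r i y ^ 2 ≤ f x + ρ * ∑ i, r i x ^ 2) :
    ρ * ∑ i, r i y ^ 2 ≤ f x - f y := by
  have hx : ∑ i, r i x ^ 2 = 0 := Finset.sum_eq_zero fun i _ ↦ by rw [hfeas i, sq, zero_mul]
  rw [hx, mul_zero, add_zero] at hle
  linarith

theorem average_violation_bound_general [Nonempty ι] {κ θ : ℝ} (hρ : 0 < ρ) (hκ : 0 ≤ κ)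
    (hθ₀ : 0 ≤ θ) (hθ₂ : θ < 2) (hfeas : ∀ i, r i x = 0)
    (hle : f y + ρ * ∑ i, r i y ^ 2 ≤ f x + ρ * ∑ i, r i x ^ 2)
    (hrobust : f x - f y ≤ κ * ((1 / Fintype.card ι : ℝ) * ∑ i, |r i y|) ^ θ) :
    (1 / Fintype.card ι : ℝ) * ∑ i, |r i y| ^ 2 ≤
      (κ / (ρ * Fintype.card ι)) ^ (1 - θ / 2)⁻¹ := by
  rw [one_div_mul_eq_div] at hrobust ⊢
  have jensen : ((∑ i, |r i y|) / Fintype.card ι) ^ 2 ≤ (∑ i, |r i y| ^ 2) / Fintype.card ι :=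
    sum_div_card_sq_le_sum_sq_div_card
  have hpenalty : ρ * ∑ i, |r i y| ^ 2 ≤ κ * ((∑ i, |r i y|) / Fintype.card ι) ^ θ := by
    simpa only [sq_abs] using (mul_sum_sq_le_sub_of_penalized_le hfeas hle).trans hrobust
  refine le_rpow_inv_one_sub_half_of_le_mul_rpow (by positivity) (by positivity) hθ₀ hθ₂ jensen ?_
  calc (∑ i, |r i y| ^ 2) / Fintype.card ι
      = (ρ * ∑ i, |r i y| ^ 2) / (ρ * Fintype.card ι) := (mul_div_mul_left _ _ hρ.ne').symm
    _ ≤ κ * ((∑ i, |r i y|) / Fintype.card ι) ^ θ / (ρ * Fintype.card ι) := by gcongr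
    _ = κ / (ρ * Fintype.card ι) * ((∑ i, |r i y|) / Fintype.card ι) ^ θ := mul_div_right_comm ..

end Penalty

/-- under the square-root robustness bound, a point at least as good as a
feasible point for the penalized objective has average squared constraint violation at
most `(κ/(ρF))^{4/3}`. -/
theorem average_violation_bound
    {N F : ℕ} (hF : 1 ≤ F)
    (C : Matrix (Fin N) (Fin N) ℝ) (A : Fin F → Matrix (Fin N) (Fin N) ℝ)
    (b : Fin F → ℝ) (ρ κ : ℝ) (hρ : 0 < ρ) (hκ : 0 ≤ κ)
    (Xstar Xt : Matrix (Fin N) (Fin N) ℝ)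
    (hfeas : ∀ i, frobInner (A i) Xstar = b i)
    (hle : penalizedObj C A b ρ Xt ≤ penalizedObj C A b ρ Xstar)
    (hrobust : frobInner C (Xstar - Xt) ≤
      κ * Real.sqrt ((1 / F : ℝ) * ∑ i, |frobInner (A i) Xt - b i|)) :
    (1 / F : ℝ) * ∑ i, |frobInner (A i) Xt - b i| ^ 2 ≤
      (κ / (ρ * F)) ^ ((4 : ℝ) / 3) := by
  have : Nonempty (Fin F) := ⟨⟨0, hF⟩⟩
  simpa only [Fintype.card_fin, show (1 - 1 / 2 / 2 : ℝ)⁻¹ = 4 / 3 by norm_num] using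
    average_violation_bound_general (f := frobInner C) (r := fun i X ↦ frobInner (A i) X - b i)
      (θ := 1 / 2) hρ hκ (by norm_num) (by norm_num) (fun i ↦ sub_eq_zero.2 (hfeas i)) hle
      (by simpa only [Fintype.card_fin, frobInner_sub_right, Real.sqrt_eq_rpow] using hrobust)
end
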